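/- The random-to-top element D_1 satisfies the polynomial relation D_1·(D_1 − 1)·(D_1 − 2)···(D_1 − (n−2))·(D_1 − n) = 0 in ℚ[S_n]; that is, the product over the factors (D_1 − m) for m ∈ {0,1,…,n−2,n} vanishes (note the factor (D_1 − (n−1)) is absent). -/

import Mathlib

/-- `D n j` is the element of the group algebra `ℚ[S_n]` given by the sum of all
permutations `ρ` of `{0,…,n-1}` (0-indexed version of `{1,…,n}`) that are strictly
increasing on the positions `{j,…,n-1}` (1-indexed: `{j+1,…,n}`).
`D n 1` is the random-to-top element `σ_1`. -/
noncomputable def D (n j : ℕ) : MonoidAlgebra ℚ (Equiv.Perm (Fin n)) :=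
  ∑ ρ : Equiv.Perm (Fin n),
    if ∀ i i' : Fin n, j ≤ (i : ℕ) → i < i' → ρ i < ρ i'
    then MonoidAlgebra.of ℚ (Equiv.Perm (Fin n)) ρ else 0

/-- increasing from position `j` on -/
def IncFrom (n j : ℕ) (ρ : Equiv.Perm (Fin n)) : Prop :=
  ∀ i i' : Fin n, j ≤ (i : ℕ) → i < i' → ρ i < ρ i'

open Classical in
theorem D_eq (n j : ℕ) : D n j = ∑ ρ : Equiv.Perm (Fin n),
    (if IncFrom n j ρ then (1:ℚ) else 0) • MonoidAlgebra.of ℚ (Equiv.Perm (Fin n)) ρ := by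
  unfold D IncFrom
  refine Finset.sum_congr rfl fun ρ _ => ?_
  split_ifs <;> simp

theorem cyc_gt {N : ℕ} (k i : Fin (N+1)) (h : k < i) : Fin.cycleRange k i = i :=
  Fin.cycleRange_of_gt h

theorem inc_lt {N j : ℕ} (τ : Equiv.Perm (Fin (N+1))) (k : Fin (N+1)) (hk : (k:ℕ) < j) :
    IncFrom (N+1) j (τ * Fin.cycleRange k) ↔ IncFrom (N+1) j τ := by
  unfold IncFrom
  refine forall_congr' fun i => forall_congr' fun i' => ?_
  refine forall_congr' fun h => forall_congr' fun h' => ?_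
  rw [Equiv.Perm.mul_apply, Equiv.Perm.mul_apply, cyc_gt k i (by rw [Fin.lt_def]; omega),
    cyc_gt k i' (by rw [Fin.lt_def] at *; omega)]

theorem inc_ge {N j : ℕ} (τ : Equiv.Perm (Fin (N+1))) (k : Fin (N+1)) (hk : j ≤ (k:ℕ)) :
    IncFrom (N+1) j (τ * Fin.cycleRange k) ↔ (IncFrom (N+1) (j+1) τ ∧
      (∀ i : Fin (N+1), j < (i:ℕ) → i ≤ k → τ i < τ 0) ∧
      (∀ i : Fin (N+1), k < i → τ 0 < τ i)) := by
  have e1 : ∀ i : Fin (N+1), k < i → (τ * Fin.cycleRange k) i = τ i := by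
    intro i hi
    rw [Equiv.Perm.mul_apply, cyc_gt k i hi]
  have e2 : (τ * Fin.cycleRange k) k = τ 0 := by
    rw [Equiv.Perm.mul_apply, Fin.cycleRange_self]
  have e3 : ∀ i : Fin (N+1), (h : i < k) → (τ * Fin.cycleRange k) i = τ ⟨i+1, by omega⟩ := by
    intro i hi
    rw [Equiv.Perm.mul_apply]
    congr 1
    apply Fin.ext
    rw [Fin.coe_cycleRange_of_lt hi]
  generalize τ * Fin.cycleRange k = ρ at *
  have e3' : ∀ i : Fin (N+1), (h0 : 0 < (i:ℕ)) → i ≤ k → τ i = ρ ⟨i-1, by omega⟩ := by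
    intro i h0 hi
    rw [e3 _ (by rw [Fin.lt_def]; rw [Fin.le_def] at hi; simp only; omega)]
    congr 1
    apply Fin.ext
    simp only
    omega
  constructor
  · intro h
    have A : ∀ i : Fin (N+1), j < (i:ℕ) → i ≤ k → τ i < τ 0 := by
      intro i hi hik
      rw [e3' i (by omega) hik, ← e2]
      rw [Fin.le_def] at hik
      exact h _ _ (by simp only; omega) (by rw [Fin.lt_def]; simp only; omega)
    have B : ∀ i : Fin (N+1), k < i → τ 0 < τ i := by
      intro i hi
      rw [← e1 i hi, ← e2]
      exact h _ _ hk hi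
    refine ⟨?_, A, B⟩
    intro i i' hi hii
    rcases le_or_gt i' k with h1 | h1
    · rw [e3' i (by omega) (hii.le.trans h1), e3' i' (by rw [Fin.lt_def] at hii; omega) h1]
      rw [Fin.lt_def] at hii
      exact h _ _ (by simp only; omega) (by rw [Fin.lt_def]; simp only; omega)
    · rcases le_or_gt i k with h2 | h2
      · exact (A i (by omega) h2).trans (B i' h1)
      · rw [← e1 i h2, ← e1 i' h1]
        exact h _ _ (by omega) hii
  · rintro ⟨h, A, B⟩ i i' hi hii
    rcases lt_trichotomy i' k with h1 | h1 | h1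
    · rw [e3 i (hii.trans h1), e3 i' h1]
      rw [Fin.lt_def] at hii
      exact h _ _ (by simp only; omega) (by rw [Fin.lt_def]; simp only; omega)
    · subst h1
      rw [e3 i hii, e2]
      rw [Fin.lt_def] at hii
      exact A _ (by simp only; omega) (by rw [Fin.le_def]; simp only; omega)
    · rw [e1 i' h1]
      rcases lt_trichotomy i k with h2 | h2 | h2
      · rw [e3 i h2]
        rw [Fin.lt_def] at *
        exact h _ _ (by simp only; omega) (by rw [Fin.lt_def]; simp only; omega)
      · subst h2
        rw [e2]; exact B _ h1
      · rw [e1 i h2]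
        rw [Fin.lt_def] at *
        exact h _ _ (by omega) (by rw [Fin.lt_def]; omega)

theorem exists_k {N j : ℕ} (hj : j < N + 1) (τ : Equiv.Perm (Fin (N+1)))
    (h : IncFrom (N+1) (j+1) τ) :
    ∃ k0 : Fin (N+1), ∀ k : Fin (N+1),
      (j ≤ (k:ℕ) ∧ IncFrom (N+1) j (τ * Fin.cycleRange k)) ↔ k = k0 := by
  classical
  set S : Finset (Fin (N+1)) := Finset.univ.filter
    (fun i => (i:ℕ) = j ∨ (j < (i:ℕ) ∧ τ i < τ 0)) with hS
  have hne : S.Nonempty := ⟨⟨j, hj⟩, by simp [hS]⟩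
  have hm := S.max'_mem hne
  have hmax : ∀ i ∈ S, i ≤ S.max' hne := fun i hi => S.le_max' i hi
  generalize S.max' hne = k0 at *
  simp only [hS, Finset.mem_filter, Finset.mem_univ, true_and] at hm hmax
  have hk0 : j ≤ (k0:ℕ) := by omega
  have A : ∀ i : Fin (N+1), j < (i:ℕ) → i ≤ k0 → τ i < τ 0 := by
    intro i hi hik
    rw [Fin.le_def] at hik
    rcases hm with hm | ⟨_, hm⟩
    · omega
    · rcases Nat.lt_or_ge i k0 with h1 | h1
      · exact (h i k0 (by omega) h1).trans hm
      · have : i = k0 := Fin.ext (by omega)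
        rw [this]; exact hm
  have B : ∀ i : Fin (N+1), k0 < i → τ 0 < τ i := by
    intro i hi
    have h1 : ¬ τ i < τ 0 := fun h2 =>
      absurd (hmax i (Or.inr ⟨by rw [Fin.lt_def] at hi; omega, h2⟩)) (not_le.mpr hi)
    refine lt_of_le_of_ne (not_lt.mp h1) fun h2 => ?_
    have := τ.injective h2
    rw [← this] at hi
    exact absurd hi (Fin.not_lt_zero _)
  refine ⟨k0, fun k => ⟨?_, ?_⟩⟩
  · rintro ⟨hk, hi⟩
    rw [inc_ge τ k hk] at hi
    obtain ⟨_, A', B'⟩ := hi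
    rcases lt_trichotomy k k0 with h1 | h1 | h1
    · exact absurd (A k0 (by rw [Fin.lt_def] at h1; omega) le_rfl) (B' k0 h1).asymm
    · exact h1
    · exact absurd (A' k (by rw [Fin.lt_def] at h1; omega) le_rfl) (B k h1).asymm
  · rintro rfl
    exact ⟨hk0, (inc_ge τ k hk0).2 ⟨h, A, B⟩⟩

open Classical in
theorem count_k {N j : ℕ} (hj : j < N + 1) (τ : Equiv.Perm (Fin (N+1))) :
    ∑ k : Fin (N+1), (if IncFrom (N+1) j (τ * Fin.cycleRange k) then (1:ℚ) else 0) =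
      j * (if IncFrom (N+1) j τ then (1:ℚ) else 0) +
      (if IncFrom (N+1) (j+1) τ then (1:ℚ) else 0) := by
  have h1 : ∀ k : Fin (N+1), (if IncFrom (N+1) j (τ * Fin.cycleRange k) then (1:ℚ) else 0) =
      (if (k:ℕ) < j then (1:ℚ) else 0) * (if IncFrom (N+1) j τ then (1:ℚ) else 0) +
      (if j ≤ (k:ℕ) ∧ IncFrom (N+1) j (τ * Fin.cycleRange k) then (1:ℚ) else 0) := by
    intro k
    rcases Nat.lt_or_ge k j with h | h
    · simp [inc_lt τ k h, h]
    · simp [h]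
  rw [Finset.sum_congr rfl fun k _ => h1 k, Finset.sum_add_distrib, ← Finset.sum_mul]
  congr 1
  · congr 1
    rw [Fin.sum_univ_eq_sum_range (fun k => if k < j then (1:ℚ) else 0) (N+1),
      ← Finset.sum_filter]
    have : (Finset.range (N+1)).filter (fun k => k < j) = Finset.range j := by
      ext x; simp; omega
    simp [this]
  · by_cases h : IncFrom (N+1) (j+1) τ
    · obtain ⟨k0, hk⟩ := exists_k hj τ h
      simp only [hk, h]
      simp
    · rw [if_neg h]
      refine Finset.sum_eq_zero fun k _ => if_neg ?_
      rintro ⟨a, b⟩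
      exact h ((inc_ge τ k a).1 b).1

/-- explicit form of `D_1` -/
noncomputable def EE (N : ℕ) : MonoidAlgebra ℚ (Equiv.Perm (Fin (N+1))) :=
  ∑ k : Fin (N+1), MonoidAlgebra.of ℚ (Equiv.Perm (Fin (N+1))) (Fin.cycleRange k)⁻¹

theorem D_mul_EE {N j : ℕ} (hj : j < N + 1) :
    D (N+1) j * EE N = (j:ℚ) • D (N+1) j + D (N+1) (j+1) := by
  classical
  rw [D_eq, D_eq, EE, Finset.mul_sum]
  have h1 : ∀ k : Fin (N+1), (∑ ρ : Equiv.Perm (Fin (N+1)),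
      (if IncFrom (N+1) j ρ then (1:ℚ) else 0) • MonoidAlgebra.of ℚ (Equiv.Perm (Fin (N+1))) ρ) *
      MonoidAlgebra.of ℚ (Equiv.Perm (Fin (N+1))) (Fin.cycleRange k)⁻¹ =
      ∑ τ : Equiv.Perm (Fin (N+1)),
      (if IncFrom (N+1) j (τ * Fin.cycleRange k) then (1:ℚ) else 0) •
        MonoidAlgebra.of ℚ (Equiv.Perm (Fin (N+1))) τ := by
    intro k
    rw [Finset.sum_mul, ← Equiv.sum_comp (Equiv.mulRight (Fin.cycleRange k))]
    refine Finset.sum_congr rfl fun τ _ => ?_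
    rw [Equiv.coe_mulRight, smul_mul_assoc, ← map_mul, mul_inv_cancel_right]
  rw [Finset.sum_congr rfl fun k _ => h1 k, Finset.sum_comm, Finset.smul_sum,
    ← Finset.sum_add_distrib]
  refine Finset.sum_congr rfl fun τ _ => ?_
  rw [← Finset.sum_smul, count_k hj, add_smul, mul_smul]

theorem D_zero (n : ℕ) : D n 0 = 1 := by
  classical
  rw [D_eq, Finset.sum_eq_single 1]
  · rw [if_pos (by intro i i' _ h; exact h), one_smul, map_one]
  · intro ρ _ hρ
    rw [if_neg, zero_smul]
    intro h
    apply hρ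
    have hm : StrictMono ρ := fun i i' hi => h i i' (Nat.zero_le _) hi
    have := Subsingleton.elim (hm.orderIsoOfSurjective ρ ρ.surjective) (OrderIso.refl (Fin n))
    ext i
    have h2 := congrArg (fun f : Fin n ≃o Fin n => f i) this
    simpa using congrArg Fin.val h2
  · simp

theorem D_one (N : ℕ) : D (N+1) 1 = EE N := by
  have := D_mul_EE (N := N) (j := 0) (by omega)
  rw [D_zero] at this
  simpa using this.symm

theorem D_mul_D {N j : ℕ} (hj : j < N + 1) :
    D (N+1) j * (D (N+1) 1 - (j : MonoidAlgebra ℚ (Equiv.Perm (Fin (N+1))))) =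
      D (N+1) (j+1) := by
  rw [mul_sub, D_one, D_mul_EE hj, ← (Nat.cast_commute j _).eq, ← nsmul_eq_mul, Nat.cast_smul_eq_nsmul]
  abel

theorem prod_D {N : ℕ} (j : ℕ) (hj : j ≤ N + 1) :
    ((List.range j).map
      (fun m => D (N+1) 1 - (m : MonoidAlgebra ℚ (Equiv.Perm (Fin (N+1)))))).prod =
      D (N+1) j := by
  induction j with
  | zero => simp [D_zero]
  | succ j ih =>
    have ih' := ih (by omega)
    simp only [List.bind_eq_flatMap, List.range_succ, List.flatMap_append, List.map_append,
      List.prod_append] at ih' ⊢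
    rw [ih']
    simpa using D_mul_D (by omega)

theorem D_last (N : ℕ) : D (N+1) N = D (N+1) (N+1) := by
  classical
  rw [D_eq, D_eq]
  refine Finset.sum_congr rfl fun τ _ => ?_
  rw [if_pos, if_pos]
  · intro i i' h; omega
  · intro i i' h h'; rw [Fin.lt_def] at h'; omega

theorem stmt_3 (n : ℕ) (hn : 2 ≤ n) :
    ((List.range (n - 1)).map
      (fun m => D n 1 - (m : MonoidAlgebra ℚ (Equiv.Perm (Fin n))))).prod *
      (D n 1 - (n : MonoidAlgebra ℚ (Equiv.Perm (Fin n)))) = 0 := by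
  obtain ⟨N, rfl⟩ : ∃ N, n = N + 1 := ⟨n - 1, by omega⟩
  rw [Nat.add_sub_cancel, prod_D N (by omega)]
  have h := D_mul_D (N := N) (j := N) (by omega)
  rw [← D_last] at h
  rw [Nat.cast_succ, ← sub_sub, mul_sub, h, mul_one, sub_self]
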